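/- Let p be a prime. Suppose L ⊆ Z^{p-1} is a translate set for a tiling of Z^{p-1} by the semi-cross V = {0, e_1, ..., e_{p-1}}, and suppose 0 ∈ L. Then the number of elements of L of the form e_{i_1} + ... + e_{i_k} with i_1 < ... < i_k (all coordinates 0 or 1, exactly k ones) equals (C(p-1, k) + (p-1)(-1)^k)/p, for each 1 ≤ k < p. -/

import Mathlib

/-- A tiling of `ℤ^n` by translates of `V` with translate set `L`:
every point has a unique representation `v + l` with `v ∈ V`, `l ∈ L`. -/
def IsTiling {n : ℕ} (V L : Set (Fin n → ℤ)) : Prop :=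
  ∀ x : Fin n → ℤ, ∃! p : (Fin n → ℤ) × (Fin n → ℤ),
    p.1 ∈ V ∧ p.2 ∈ L ∧ p.1 + p.2 = x

/-- The semi-cross `{0, e_1, …, e_m}` in `ℤ^m`. -/
def semicross (m : ℕ) : Set (Fin m → ℤ) :=
  insert 0 (Set.range fun i : Fin m => Pi.single i 1)

/-- The set of elements of `L` of type `[1^k]`: exactly `k` coordinates equal `1`,
all others equal `0`. -/
def typeOneK {m : ℕ} (L : Set (Fin m → ℤ)) (k : ℕ) : Set (Fin m → ℤ) :=
  {x ∈ L | ∃ s : Finset (Fin m), s.card = k ∧ ∀ i, x i = if i ∈ s then 1 else 0}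

/-!
Let `f` be the indicator function of `L`, so that the translates of `f` along the `p` elements of
the semi-cross `V` sum to `1`. The translates along `-V` then sum to at most `1`, because those of
`L` by elements of `V` are disjoint; summing the result along `V` gives the constant `p`, so it is
`1` everywhere. For a prime `q` other than `p`, the sum of the translates along `q • V` is congruent
modulo `q` to the `q`-th iterate of the sum along `V`, hence to `p ^ (q - 1)`, so it is at least
`1`, and again summing along `V` shows that it is `1` everywhere. Thus all dilations `j • V` with
`j` coprime to `p` tile along with `V`.

Consequently the `j`-th power sum of the translations by `e_1, …, e_{p-1}` acts as `-1` on
`g = p f - 1` for `0 < j < p`. By Newton's identities their `k`-th elementary symmetric function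
acts as `(-1) ^ k`, and evaluating at `0` gives the count.
-/

open Finset MvPolynomial

theorem natCast_dvd_sum_pow_sub_sum_pow {R ι : Type*} [CommRing R] {q : ℕ} (hq : q.Prime)
    (s : Finset ι) (a : ι → R) : (q : R) ∣ ∑ i ∈ s, a i ^ q - (∑ i ∈ s, a i) ^ q := by
  classical
  induction s using Finset.induction_on with
  | empty => simp [hq.ne_zero]
  | insert i s hi ih =>
    obtain ⟨r, hr⟩ := exists_add_pow_prime_eq hq (a i) (∑ j ∈ s, a j)
    rw [sum_insert hi, sum_insert hi, hr]
    convert ih.sub (Dvd.intro (a i * (∑ j ∈ s, a j) * r) rfl) using 1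
    ring

theorem map_esymm_eq_neg_one_pow_smul {σ R M : Type*} [Fintype σ] [CommRing R] [AddCommGroup M]
    [Module R M] [IsAddTorsionFree M] (φ : MvPolynomial σ R →ₐ[R] Module.End R M) {g : M} {k : ℕ}
    (h : ∀ j, j ≠ 0 → j ≤ k → φ (psum σ R j) g = -g) :
    φ (esymm σ R k) g = (-1 : ℤ) ^ k • g := by
  induction k using Nat.strong_induction_on with
  | _ k ih =>
    rcases eq_or_ne k 0 with rfl | hk
    · simp
    have h_sign (n : ℕ) (x : M) : φ ((-1) ^ n) x = (-1 : ℤ) ^ n • x := by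
      rcases n.even_or_odd with hn | hn <;> simp [hn.neg_one_pow]
    have h_term : ∀ a ∈ {a ∈ antidiagonal k | a.1 < k},
        φ ((-1) ^ a.1 * esymm σ R a.1 * psum σ R a.2) g = -g := by
      intro a ha
      rw [mem_filter, HasAntidiagonal.mem_antidiagonal] at ha
      rw [map_mul, map_mul, Module.End.mul_apply, Module.End.mul_apply, h a.2 (by lia) (by lia),
        map_neg, ih a.1 ha.2 fun j hj hja => h j hj (by lia), map_neg, h_sign, smul_smul,
        ← mul_pow, neg_one_mul, neg_neg, one_pow, one_smul]
    have h_card : #{a ∈ antidiagonal k | a.1 < k} = k := by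
      rw [card_filter, Nat.sum_antidiagonal_eq_sum_range_succ_mk, sum_range_succ,
        sum_congr rfl fun i hi => if_pos (mem_range.1 hi)]
      simp
    have h_newton : k • φ (esymm σ R k) g = k • (-1 : ℤ) ^ k • g := by
      calc k • φ (esymm σ R k) g = φ (k * esymm σ R k) g := by simp
        _ = (-1 : ℤ) ^ (k + 1) •
              ∑ a ∈ antidiagonal k with a.1 < k,
                φ ((-1) ^ a.1 * esymm σ R a.1 * psum σ R a.2) g := by
          rw [mul_esymm_eq_sum, map_mul, Module.End.mul_apply, h_sign, map_sum, LinearMap.sum_apply]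
        _ = (-1 : ℤ) ^ (k + 1) • k • -g := by rw [sum_congr rfl h_term, sum_const, h_card]
        _ = k • (-1 : ℤ) ^ k • g := by
          rw [pow_succ, mul_neg_one, neg_smul, smul_neg, smul_neg, neg_neg, smul_comm]
    exact nsmul_right_injective hk h_newton

/-- A weight `f` on `G` tiles along the finite family `d` if its translates `f (· + d i)` sum to
`1`. With this sign, the indicator function of `L` tiles along `d` when `L` and `-d` tile `G`. -/
def IsWeightedTiling {ι G R : Type*} [Fintype ι] [Add G] [AddCommMonoidWithOne R] (d : ι → G)
    (f : G → R) : Prop :=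
  ∀ x, ∑ i, f (x + d i) = 1

section Shift

variable {R ι G : Type*} [CommSemiring R] [AddCommMonoid G]

/-- The action of polynomials on functions `G → R` in which the variable `X i` acts as the
translation `f ↦ f (· + d i)`. -/
noncomputable def shift (d : ι → G) : MvPolynomial ι R →ₐ[R] Module.End R (G → R) :=
  AddMonoidAlgebra.lift R _ (ι →₀ ℕ)
    { toFun n := LinearMap.funLeft R R (· + Finsupp.linearCombination ℕ d n.toAdd)
      map_one' := by ext; simp [LinearMap.funLeft_apply]
      map_mul' a b := by ext; simp [LinearMap.funLeft_apply, add_assoc] }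

theorem shift_monomial_one (d : ι → G) (n : ι →₀ ℕ) (f : G → R) (x : G) :
    shift d (monomial n 1) f x = f (x + Finsupp.linearCombination ℕ d n) := by
  simp [shift, monomial, LinearMap.funLeft_apply]

variable [Fintype ι]

theorem shift_psum (d : ι → G) (j : ℕ) (f : G → R) (x : G) :
    shift d (psum ι R j) f x = ∑ i, f (x + j • d i) := by
  simp only [psum, X_pow_eq_monomial, map_sum, LinearMap.sum_apply, Finset.sum_apply,
    shift_monomial_one, Finsupp.linearCombination_single]

theorem shift_esymm (d : ι → G) (k : ℕ) (f : G → R) (x : G) :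
    shift d (esymm ι R k) f x = ∑ s ∈ powersetCard k univ, f (x + ∑ i ∈ s, d i) := by
  simp only [esymm_eq_sum_monomial, map_sum, LinearMap.sum_apply, Finset.sum_apply,
    shift_monomial_one, Finsupp.linearCombination_single, one_smul]

theorem IsWeightedTiling.shift_psum_one_pow_succ {d : ι → G} {f : G → R}
    (h : IsWeightedTiling d f) (n : ℕ) :
    shift d (psum ι R 1 ^ (n + 1)) f = (Fintype.card ι : R) ^ n • 1 := by
  have h_one : shift d (psum ι R 1) 1 = (Fintype.card ι : R) • 1 := by
    ext x; simp [shift_psum, -psum_one]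
  induction n with
  | zero => ext x; simp [shift_psum, h x, -psum_one]
  | succ n ih =>
    rw [pow_succ', map_mul, Module.End.mul_apply, ih, map_smul, h_one, smul_smul, pow_succ]

end Shift

theorem IsWeightedTiling.natCast_dvd_sum_add_prime_nsmul_sub {R ι G : Type*} [CommRing R]
    [Fintype ι] [AddCommMonoid G] {d : ι → G} {f : G → R} {q : ℕ} (h : IsWeightedTiling d f)
    (hq : q.Prime) (x : G) :
    (q : R) ∣ ∑ i, f (x + q • d i) - (Fintype.card ι : R) ^ (q - 1) := by
  obtain ⟨r, hr⟩ : (q : MvPolynomial ι R) ∣ psum ι R q - psum ι R 1 ^ q := by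
    simpa only [psum, pow_one] using
      natCast_dvd_sum_pow_sub_sum_pow hq univ (X : ι → MvPolynomial ι R)
  have h_pow : shift d (psum ι R 1 ^ q) f = (Fintype.card ι : R) ^ (q - 1) • 1 := by
    rw [← h.shift_psum_one_pow_succ, Nat.sub_add_cancel hq.one_le]
  refine ⟨shift d r f x, ?_⟩
  have h_apply := congrArg (fun P => shift d P f x) hr
  simpa only [map_sub, LinearMap.sub_apply, Pi.sub_apply, h_pow, shift_psum, Pi.smul_apply,
    Pi.one_apply, smul_eq_mul, mul_one, map_mul, map_natCast, Module.End.mul_apply,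
    Module.End.natCast_apply, nsmul_eq_mul, Pi.mul_apply, Pi.natCast_apply] using h_apply

theorem eq_const_of_le_of_sum_add_eq {ι G M : Type*} [Fintype ι] [Nonempty ι] [AddGroup G]
    [AddCommMonoid M] [PartialOrder M] [IsOrderedCancelAddMonoid M] {d : ι → G} {f : G → M} {c : M}
    (hc : ∀ x, c ≤ f x) (h : ∀ x, ∑ i, f (x + d i) = Fintype.card ι • c) (x : G) : f x = c := by
  obtain ⟨i⟩ := ‹Nonempty ι›
  have h_sum : ∑ _k : ι, c = ∑ k, f (x - d i + d k) := by simp [h]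
  simpa using ((sum_eq_sum_iff_of_le fun k _ => hc _).1 h_sum i (mem_univ i)).symm

namespace IsWeightedTiling

theorem nonempty {ι G R : Type*} [Fintype ι] [AddZeroClass G] [AddCommMonoidWithOne R]
    [NeZero (1 : R)] {d : ι → G} {f : G → R} (h : IsWeightedTiling d f) : Nonempty ι := by
  by_contra h_empty
  rw [not_nonempty_iff] at h_empty
  simpa using h 0

variable {ι G : Type*} [Fintype ι] [AddCommGroup G] {d : ι → G} {f : G → ℤ}

theorem sum_sub_le_one (h : IsWeightedTiling d f) (hf : 0 ≤ f) (x : G) :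
    ∑ i, f (x - d i) ≤ 1 := by
  classical
  have h_le_one (y : G) : f y ≤ 1 := by
    obtain ⟨i⟩ := h.nonempty
    simpa [h (y - d i)] using
      single_le_sum (f := fun k => f (y - d i + d k)) (fun k _ => hf _) (mem_univ i)
  have h_pair {i k : ι} (hik : i ≠ k) : f (x - d i) + f (x - d k) ≤ 1 := by
    have := sum_le_univ_sum_of_nonneg (s := {i, k}) fun l => hf (x - d i - d k + d l)
    rw [sum_pair hik, h (x - d i - d k)] at this
    rwa [sub_add_cancel, sub_right_comm, sub_add_cancel, add_comm] at this
  by_cases h_zero : ∀ i, f (x - d i) = 0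
  · simp [h_zero]
  obtain ⟨i, hi⟩ := not_forall.1 h_zero
  have h_pos : 0 ≤ f (x - d i) := hf _
  rw [sum_eq_single i (fun k _ hki => ?_) (by simp)]
  · exact h_le_one _
  · have : 0 ≤ f (x - d k) := hf _
    have := h_pair hki
    lia

theorem neg (h : IsWeightedTiling d f) (hf : 0 ≤ f) : IsWeightedTiling (-d) f := by
  have := h.nonempty
  intro x
  simp only [Pi.neg_apply, ← sub_eq_add_neg]
  rw [← neg_inj]
  refine eq_const_of_le_of_sum_add_eq (d := d) (fun y => neg_le_neg (h.sum_sub_le_one hf y))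
    (fun y => ?_) x
  simp_rw [sum_neg_distrib, add_sub_right_comm]
  rw [sum_comm]
  simp [h _]

theorem prime_nsmul {q : ℕ} (h : IsWeightedTiling d f) (hf : 0 ≤ f) (hq : q.Prime)
    (hq_card : ¬q ∣ Fintype.card ι) : IsWeightedTiling (q • d) f := by
  have := h.nonempty
  refine eq_const_of_le_of_sum_add_eq (d := d) (f := fun y => ∑ i, f (y + q • d i))
    (fun y => ?_) (fun y => ?_)
  · have h_nonneg : 0 ≤ ∑ i, f (y + q • d i) := sum_nonneg fun i _ => hf _
    have h_ne : ∑ i, f (y + q • d i) ≠ 0 := fun h_zero => by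
      have h_dvd := h.natCast_dvd_sum_add_prime_nsmul_sub hq y
      rw [h_zero, zero_sub, dvd_neg] at h_dvd
      exact hq_card (hq.dvd_of_dvd_pow (by exact_mod_cast h_dvd))
    lia
  · simp_rw [add_right_comm _ (d _)]
    rw [sum_comm]
    simp [h _]

theorem nsmul {j : ℕ} (h : IsWeightedTiling d f) (hf : 0 ≤ f)
    (hj : j.Coprime (Fintype.card ι)) : IsWeightedTiling (j • d) f := by
  induction j using induction_on_primes generalizing d with
  | zero =>
    have := (Fintype.card_le_one_iff_subsingleton (α := ι)).1 (by simpa using hj.le)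
    obtain ⟨i⟩ := h.nonempty
    have := uniqueOfSubsingleton i
    intro x
    simpa using h (x - d default)
  | one => simpa using h
  | prime_mul q j hq ih =>
    obtain ⟨hq_cop, hj_cop⟩ := Nat.coprime_mul_iff_left.1 hj
    have := ih (h.prime_nsmul hf hq (hq.coprime_iff_not_dvd.1 hq_cop)) hj_cop
    rwa [mul_comm, mul_smul]

theorem card_succ_mul_sum_powersetCard {k : ℕ}
    (h : IsWeightedTiling (fun o : Option ι => o.elim 0 d) f) (hf : 0 ≤ f)
    (hk : k < (Fintype.card ι + 1).minFac) (x : G) :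
    (Fintype.card ι + 1) * ∑ s ∈ powersetCard k univ, f (x + ∑ i ∈ s, d i) =
      (Fintype.card ι).choose k + (-1) ^ k * ((Fintype.card ι + 1) * f x - 1) := by
  set g : G → ℤ := fun y => (Fintype.card ι + 1) * f y - 1 with hg
  have h_psum (j : ℕ) (hj : j ≠ 0) (hjk : j ≤ k) : shift d (psum ι ℤ j) g = -g := by
    have h_coprime : j.Coprime (Fintype.card (Option ι)) := by
      simpa using (Nat.coprime_of_lt_minFac hj (hjk.trans_lt hk)).symm
    ext y
    have h_sum : f y + ∑ i, f (y + j • d i) = 1 := by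
      simpa using h.nsmul hf h_coprime y
    have h_shift : shift d (psum ι ℤ j) g y =
        (Fintype.card ι + 1) * ∑ i, f (y + j • d i) - Fintype.card ι := by
      simp [shift_psum, hg, mul_sum, -psum_one]
    rw [h_shift, Pi.neg_apply]
    linear_combination (Fintype.card ι + 1) * h_sum
  have h_esymm : (Fintype.card ι + 1) * ∑ s ∈ powersetCard k univ, f (x + ∑ i ∈ s, d i) -
      (Fintype.card ι).choose k = (-1) ^ k * g x := by
    simpa [shift_esymm, hg, mul_sum] using
      congrFun (map_esymm_eq_neg_one_pow_smul (g := g) (shift d) h_psum) x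
  linear_combination h_esymm

end IsWeightedTiling

theorem optionElim_single_one_injective {ι R : Type*} [DecidableEq ι] [Zero R] [One R]
    [NeZero (1 : R)] :
    Function.Injective fun o : Option ι => o.elim (0 : ι → R) (Pi.single · 1) := by
  have h_ne (i : ι) : (Pi.single i 1 : ι → R) ≠ 0 := Pi.single_ne_zero_iff.2 one_ne_zero
  rintro (_ | i) (_ | j) h
  · rfl
  · exact absurd h.symm (h_ne j)
  · exact absurd h (h_ne i)
  · simpa [Pi.single_apply] using congrFun h i

theorem sum_single_one_apply {ι R : Type*} [DecidableEq ι] [AddCommMonoidWithOne R]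
    (s : Finset ι) (j : ι) : (∑ i ∈ s, Pi.single i 1 : ι → R) j = if j ∈ s then 1 else 0 := by
  rw [Finset.sum_apply, sum_pi_single]

theorem sum_single_one_injective {ι R : Type*} [DecidableEq ι] [AddCommMonoidWithOne R]
    [NeZero (1 : R)] :
    Function.Injective fun s : Finset ι => (∑ i ∈ s, Pi.single i 1 : ι → R) := fun s t h => by
  ext j
  have h_apply := congrFun h j
  simp only [sum_single_one_apply] at h_apply
  by_cases hs : j ∈ s <;> by_cases ht : j ∈ t <;> simp_all

section Tiling

variable {n m : ℕ}

theorem IsTiling.isWeightedTiling_neg {ι : Type*} [Fintype ι] {d : ι → Fin n → ℤ}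
    {L : Set (Fin n → ℤ)} (hT : IsTiling (Set.range d) L) (hd : Function.Injective d) :
    IsWeightedTiling (-d) (L.indicator (1 : (Fin n → ℤ) → ℤ)) := by
  intro x
  obtain ⟨⟨_, l⟩, ⟨⟨i, rfl⟩, hl, hx⟩, h_unique⟩ := hT x
  have h_iff (k : ι) : x - d k ∈ L ↔ k = i := by
    refine ⟨fun hk => hd ?_, ?_⟩
    · exact congrArg Prod.fst (h_unique (d k, x - d k) ⟨⟨k, rfl⟩, hk, add_sub_cancel _ _⟩)
    · rintro rfl
      rwa [← hx, add_sub_cancel_left]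
  classical simp [Set.indicator_apply, ← sub_eq_add_neg, h_iff]

theorem semicross_eq_range :
    semicross m = Set.range fun o : Option (Fin m) => o.elim 0 (Pi.single · 1) := by
  rw [Option.range_eq]
  rfl

theorem IsTiling.isWeightedTiling_optionElim {L : Set (Fin m → ℤ)}
    (hT : IsTiling (semicross m) L) :
    IsWeightedTiling (fun o : Option (Fin m) => o.elim 0 (Pi.single · 1))
      (L.indicator (1 : (Fin m → ℤ) → ℤ)) := by
  rw [semicross_eq_range] at hT
  simpa using (hT.isWeightedTiling_neg optionElim_single_one_injective).neg
    (Set.indicator_nonneg fun _ _ => zero_le_one)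

theorem typeOneK_eq_image (L : Set (Fin m → ℤ)) (k : ℕ) :
    typeOneK L k = (fun s => ∑ i ∈ s, Pi.single i 1) ''
      {s : Finset (Fin m) | s.card = k ∧ ∑ i ∈ s, Pi.single i 1 ∈ L} := by
  ext x
  simp only [typeOneK, ← sum_single_one_apply, ← funext_iff, Set.mem_ofPred_eq, Set.mem_image]
  grind

theorem ncard_typeOneK (L : Set (Fin m → ℤ)) (k : ℕ) :
    ((typeOneK L k).ncard : ℤ) =
      ∑ s ∈ powersetCard k univ, L.indicator 1 (∑ i ∈ s, Pi.single i 1) := by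
  classical
  have h_coe : {s : Finset (Fin m) | s.card = k ∧ ∑ i ∈ s, Pi.single i 1 ∈ L} =
      ({s ∈ powersetCard k univ | ∑ i ∈ s, Pi.single i 1 ∈ L} : Finset (Finset (Fin m))) := by
    ext s; simp
  rw [typeOneK_eq_image, Set.ncard_image_of_injective _ sum_single_one_injective, h_coe,
    Set.ncard_coe_finset, card_filter]
  simp [Set.indicator_apply]

end Tiling

theorem stmt_13_general {m k : ℕ} {L : Set (Fin m → ℤ)} (hT : IsTiling (semicross m) L)
    (h0 : 0 ∈ L) (hk : k < (m + 1).minFac) :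
    ((m : ℤ) + 1) * ((typeOneK L k).ncard : ℤ) = (m.choose k : ℤ) + m * (-1) ^ k := by
  have h_count := hT.isWeightedTiling_optionElim.card_succ_mul_sum_powersetCard
    (Set.indicator_nonneg fun _ _ => zero_le_one) (by simpa using hk) 0
  simp only [Fintype.card_fin, zero_add, ← ncard_typeOneK, Set.indicator_of_mem h0,
    Pi.one_apply] at h_count
  linear_combination h_count

theorem stmt_13 (p : ℕ) (hp : p.Prime) (L : Set (Fin (p - 1) → ℤ))
    (hT : IsTiling (semicross (p - 1)) L) (h0 : (0 : Fin (p - 1) → ℤ) ∈ L)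
    (k : ℕ) (hk1 : 1 ≤ k) (hk : k < p) :
    (p : ℤ) * ((typeOneK L k).ncard : ℤ) =
      (Nat.choose (p - 1) k : ℤ) + (p - 1 : ℤ) * (-1) ^ k := by
  obtain ⟨m, rfl⟩ := Nat.exists_eq_succ_of_ne_zero hp.ne_zero
  simpa using stmt_13_general hT h0 (hk.trans_eq hp.minFac_eq.symm)
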